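/- For every η ∈ ℂ with η ∉ (1/2)ℤ, there is an isomorphism of Ū-modules V_η ⊗ V_η ≅ ⊕_{i=0}^{r−1} V_{2η−r+2i+1}; in particular V_η ⊗ V_η is semisimple and multiplicity free. -/

import Mathlib

noncomputable section

open scoped TensorProduct

namespace Unrolled

/-- `q^z = exp(π √-1 z / r)`. -/
def qc (r : ℕ) (z : ℂ) : ℂ := Complex.exp (Real.pi * Complex.I * z / r)

/-- `{z} = q^z - q^{-z}`. -/
def qbrk (r : ℕ) (z : ℂ) : ℂ := qc r z - qc r (-z)

/-- `[z] = {z}/{1}`. -/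
def qint (r : ℕ) (z : ℂ) : ℂ := qbrk r z / qbrk r 1

/-- `{n}! = ∏_{i=1}^n {i}`. -/
def qbrkFact (r n : ℕ) : ℂ := ∏ i ∈ Finset.range n, qbrk r ((i : ℂ) + 1)

/-- `[n]! = ∏_{i=1}^n [i]`. -/
def qintFact (r n : ℕ) : ℂ := ∏ i ∈ Finset.range n, qint r ((i : ℂ) + 1)

/-- The data of five operators `K, K⁻¹, H, E, F` on a complex vector space. -/
structure Ops (V : Type) [AddCommGroup V] [Module ℂ V] where
  K : Module.End ℂ V
  Kinv : Module.End ℂ V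
  H : Module.End ℂ V
  E : Module.End ℂ V
  F : Module.End ℂ V

/-- A module over the restricted unrolled quantum group `Ū = Ū_q^H(sl₂(ℂ))`:
five operators satisfying the defining relations of `Ū`. -/
structure Rep (r : ℕ) (V : Type) [AddCommGroup V] [Module ℂ V] extends Ops V where
  rel_KKinv : K * Kinv = 1
  rel_KinvK : Kinv * K = 1
  rel_HK : H * K = K * H
  rel_HE : H * E - E * H = (2 : ℂ) • E
  rel_HF : H * F - F * H = (-2 : ℂ) • F
  rel_KE : K * E = qc r 2 • (E * K)
  rel_KF : K * F = qc r (-2) • (F * K)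
  rel_EF : E * F - F * E = (qbrk r 1)⁻¹ • (K - Kinv)
  rel_Er : E ^ r = 0
  rel_Fr : F ^ r = 0

variable {V W U : Type} [AddCommGroup V] [Module ℂ V] [AddCommGroup W] [Module ℂ W]
  [AddCommGroup U] [Module ℂ U]

/-- A `Ū`-submodule: a subspace invariant under the five operators. -/
def Ops.Invariant (A : Ops V) (p : Submodule ℂ V) : Prop :=
  (∀ v ∈ p, A.K v ∈ p) ∧ (∀ v ∈ p, A.Kinv v ∈ p) ∧ (∀ v ∈ p, A.H v ∈ p) ∧
    (∀ v ∈ p, A.E v ∈ p) ∧ (∀ v ∈ p, A.F v ∈ p)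

/-- A simple `Ū`-module: nonzero, with no nonzero proper invariant subspace. -/
def Ops.IsSimple (A : Ops V) : Prop :=
  (∃ v : V, v ≠ 0) ∧ ∀ p : Submodule ℂ V, A.Invariant p → p = ⊥ ∨ p = ⊤

/-- A weight module: finite dimensional, a direct sum of `H`-eigenspaces, on which `K`
acts by `q^μ` on the `H`-eigenspace of eigenvalue `μ`. -/
structure IsWeight (r : ℕ) {V : Type} [AddCommGroup V] [Module ℂ V] (A : Ops V) : Prop where
  finDim : FiniteDimensional ℂ V
  sup_eigenspaces : (⨆ μ : ℂ, Module.End.eigenspace A.H μ) = ⊤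
  K_apply : ∀ (μ : ℂ), ∀ v ∈ Module.End.eigenspace A.H μ, A.K v = qc r μ • v

/-- A `Ū`-linear map. -/
def IsEquivariant (A : Ops V) (B : Ops W) (f : V →ₗ[ℂ] W) : Prop :=
  (∀ v, f (A.K v) = B.K (f v)) ∧ (∀ v, f (A.Kinv v) = B.Kinv (f v)) ∧
    (∀ v, f (A.H v) = B.H (f v)) ∧ (∀ v, f (A.E v) = B.E (f v)) ∧
    (∀ v, f (A.F v) = B.F (f v))

/-- Isomorphism of `Ū`-modules. -/
def OpsIso (A : Ops V) (B : Ops W) : Prop :=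
  ∃ e : V ≃ₗ[ℂ] W, IsEquivariant A B (e : V →ₗ[ℂ] W)

/-- The weight `α + r - 1 - 2i` of the basis vector `v_i` of the Verma module `V_α`. -/
def wt (r : ℕ) (α : ℂ) (i : ℕ) : ℂ := α + r - 1 - 2 * i

/-- The coefficient `{i}{i-α}/{1}²` occurring in `E v_i`. -/
def cE (r : ℕ) (α : ℂ) (i : ℕ) : ℂ := qbrk r i * qbrk r ((i : ℂ) - α) / qbrk r 1 ^ 2

/-- The Verma module `V_α` of highest weight `α + r - 1`, realized on `Fin r → ℂ`
with basis `v_0, …, v_{r-1}`. -/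
def vermaOps (r : ℕ) (α : ℂ) : Ops (Fin r → ℂ) where
  K := (Matrix.diagonal fun i : Fin r => qc r (wt r α (i : ℕ))).mulVecLin
  Kinv := (Matrix.diagonal fun i : Fin r => qc r (-wt r α (i : ℕ))).mulVecLin
  H := (Matrix.diagonal fun i : Fin r => wt r α (i : ℕ)).mulVecLin
  E := (Matrix.of fun i j : Fin r =>
    if (j : ℕ) = (i : ℕ) + 1 then cE r α (j : ℕ) else 0).mulVecLin
  F := (Matrix.of fun i j : Fin r =>
    if (i : ℕ) = (j : ℕ) + 1 then (1 : ℂ) else 0).mulVecLin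

/-- `α_{l,n} = (l-1)r + n + 1`, so that `S_n^{lr}` is a quotient of `V_{α_{l,n}}`. -/
def aln (r : ℕ) (l : ℤ) (n : ℕ) : ℂ := ((l : ℂ) - 1) * r + n + 1

/-- The simple module `S_n^{lr}` of highest weight `lr + n` and dimension `n+1`,
realized on `Fin (n+1) → ℂ`. -/
def smodOps (r : ℕ) (l : ℤ) (n : ℕ) : Ops (Fin (n + 1) → ℂ) where
  K := (Matrix.diagonal fun i : Fin (n + 1) => qc r (wt r (aln r l n) (i : ℕ))).mulVecLin
  Kinv := (Matrix.diagonal fun i : Fin (n + 1) => qc r (-wt r (aln r l n) (i : ℕ))).mulVecLin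
  H := (Matrix.diagonal fun i : Fin (n + 1) => wt r (aln r l n) (i : ℕ)).mulVecLin
  E := (Matrix.of fun i j : Fin (n + 1) =>
    if (j : ℕ) = (i : ℕ) + 1 then cE r (aln r l n) (j : ℕ) else 0).mulVecLin
  F := (Matrix.of fun i j : Fin (n + 1) =>
    if (i : ℕ) = (j : ℕ) + 1 then (1 : ℂ) else 0).mulVecLin

/-- `α ∈ (ℂ∖ℤ) ∪ rℤ`. -/
def goodα (r : ℕ) (α : ℂ) : Prop := (¬∃ n : ℤ, α = (n : ℂ)) ∨ ∃ m : ℤ, α = (r : ℂ) * m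

/-- The tensor product `Ū`-module structure induced by the coproduct `Δ`. -/
def tensorOps (A : Ops V) (B : Ops W) : Ops (V ⊗[ℂ] W) where
  K := TensorProduct.map A.K B.K
  Kinv := TensorProduct.map A.Kinv B.Kinv
  H := TensorProduct.map A.H (LinearMap.id : W →ₗ[ℂ] W) +
    TensorProduct.map (LinearMap.id : V →ₗ[ℂ] V) B.H
  E := TensorProduct.map (LinearMap.id : V →ₗ[ℂ] V) B.E + TensorProduct.map A.E B.K
  F := TensorProduct.map A.F (LinearMap.id : W →ₗ[ℂ] W) + TensorProduct.map A.Kinv B.F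

/-- The operator `Σ_{l=0}^{r-1} ({1}^{2l}/{l}!) q^{l(l-1)/2} E^l ⊗ F^l` on `V ⊗ W`. -/
def braidSum (r : ℕ) (A : Ops V) (B : Ops W) : Module.End ℂ (V ⊗[ℂ] W) :=
  ∑ l ∈ Finset.range r,
    (qbrk r 1 ^ (2 * l) / qbrkFact r l * qc r ((l : ℂ) * ((l : ℂ) - 1) / 2)) •
      TensorProduct.map (A.E ^ l) (B.F ^ l)

/-- The defining property of the operator `q^{H⊗H/2}` on `V ⊗ W`: it multiplies
`v ⊗ w` by `q^{λμ/2}` for weight vectors `v, w` of weights `λ, μ`. -/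
def IsqHH (r : ℕ) (A : Ops V) (B : Ops W) (Q : Module.End ℂ (V ⊗[ℂ] W)) : Prop :=
  ∀ (lam mu : ℂ) (v : V) (w : W),
    v ∈ Module.End.eigenspace A.H lam → w ∈ Module.End.eigenspace B.H mu →
      Q (v ⊗ₜ[ℂ] w) = qc r (lam * mu / 2) • (v ⊗ₜ[ℂ] w)

/-- The braiding `c_{V,W} = τ ∘ q^{H⊗H/2} ∘ Σ_l ({1}^{2l}/{l}!) q^{l(l-1)/2} E^l ⊗ F^l`,
where `Q` is the operator `q^{H⊗H/2}`. -/
def braidMap (r : ℕ) (A : Ops V) (B : Ops W) (Q : Module.End ℂ (V ⊗[ℂ] W)) :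
    V ⊗[ℂ] W →ₗ[ℂ] W ⊗[ℂ] V :=
  (TensorProduct.comm ℂ V W).toLinearMap ∘ₗ Q ∘ₗ braidSum r A B

/-- The direct sum `Ū`-module structure on a product. -/
def piOps {ι : Type} {Vf : ι → Type} [∀ i, AddCommGroup (Vf i)] [∀ i, Module ℂ (Vf i)]
    (A : ∀ i, Ops (Vf i)) : Ops (∀ i, Vf i) where
  K := LinearMap.pi fun i => (A i).K ∘ₗ LinearMap.proj i
  Kinv := LinearMap.pi fun i => (A i).Kinv ∘ₗ LinearMap.proj i
  H := LinearMap.pi fun i => (A i).H ∘ₗ LinearMap.proj i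
  E := LinearMap.pi fun i => (A i).E ∘ₗ LinearMap.proj i
  F := LinearMap.pi fun i => (A i).F ∘ₗ LinearMap.proj i

/-!
For `n < r`, the subspace of `V_α ⊗ V_β` spanned by the `v_k ⊗ v_l` with `k + l = n` contains a
highest weight vector `w_n`, obtained by solving `E w_n = 0` recursively. It also satisfies
`F ^ r w_n = 0`: this vector is killed by `E` because the coefficient `{r}` in
`E F ^ r w_n = c F ^ (r - 1) w_n` vanishes, but it lies in total degree `n + r ≥ r`, where `E` is
injective. Hence `w_n` generates an image of a Verma module, and these Verma modules are simple
because their parameters are not integers. A nonzero kernel of the resulting map from their direct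
sum would contain a nonzero vector killed by `E`, that is, a linear relation among the `w_n`, which
have distinct weights. So the map is injective, and both sides have dimension `r ^ 2`.
-/

lemma exists_mem_ne_zero_apply_eq_zero {R M : Type*} [Semiring R] [AddCommMonoid M] [Module R M]
    {f : Module.End R M} (hf : IsNilpotent f) {p : Submodule R M} (hp : ∀ v ∈ p, f v ∈ p)
    (hp₀ : p ≠ ⊥) : ∃ v ∈ p, v ≠ 0 ∧ f v = 0 := by
  by_contra! hker
  have hpow (n : ℕ) : ∀ v ∈ p, v ≠ 0 → (f ^ n) v ≠ 0 := by
    induction n with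
    | zero => exact fun v _ hv => hv
    | succ n ih =>
      intro v hvp hv
      rw [pow_succ, Module.End.mul_apply]
      exact ih (f v) (hp v hvp) (hker v hvp hv)
  obtain ⟨v, hvp, hv⟩ := Submodule.exists_mem_ne_zero_of_ne_bot hp₀
  obtain ⟨n, hn⟩ := hf
  exact hpow n v hvp hv (by rw [hn, LinearMap.zero_apply])

section QuantumNumbers

variable {r : ℕ} {α : ℂ}

lemma qc_add (r : ℕ) (z w : ℂ) : qc r (z + w) = qc r z * qc r w := by
  simp only [qc, ← Complex.exp_add]
  ring_nf

lemma qc_zero (r : ℕ) : qc r 0 = 1 := by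
  simp [qc]

lemma qc_ne_zero (r : ℕ) (z : ℂ) : qc r z ≠ 0 := Complex.exp_ne_zero _

lemma qc_neg (r : ℕ) (z : ℂ) : qc r (-z) = (qc r z)⁻¹ := by
  simp only [qc, ← Complex.exp_neg]
  ring_nf

lemma qc_sub (r : ℕ) (z w : ℂ) : qc r (z - w) = qc r z / qc r w := by
  rw [sub_eq_add_neg, qc_add, qc_neg, div_eq_mul_inv]

lemma qc_natCast_self (hr : r ≠ 0) : qc r r = -1 := by
  rw [qc, mul_div_cancel_right₀ _ (Nat.cast_ne_zero.mpr hr), Complex.exp_pi_mul_I]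

lemma qbrk_eq_zero_iff (hr : r ≠ 0) {z : ℂ} : qbrk r z = 0 ↔ ∃ m : ℤ, z = r * m := by
  have hr' : (r : ℂ) ≠ 0 := Nat.cast_ne_zero.mpr hr
  simp only [qbrk, qc, sub_eq_zero, Complex.exp_eq_exp_iff_exists_int]
  refine exists_congr fun m => ?_
  field_simp
  exact ⟨fun h => by linear_combination h / 2, fun h => by linear_combination 2 * h⟩

lemma qbrk_natCast_ne_zero {j : ℕ} (hj₀ : 0 < j) (hjr : j < r) : qbrk r j ≠ 0 := by
  rw [Ne, qbrk_eq_zero_iff (by omega)]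
  rintro ⟨m, hm⟩
  have hdvd : (r : ℤ) ∣ j := ⟨m, by exact_mod_cast hm⟩
  exact (Nat.le_of_dvd hj₀ (Int.natCast_dvd_natCast.mp hdvd)).not_gt hjr

lemma qbrk_one_ne_zero (hr : 2 ≤ r) : qbrk r 1 ≠ 0 := by
  exact_mod_cast qbrk_natCast_ne_zero one_pos hr

lemma qbrk_natCast_sub_ne_zero (hα : goodα r α) {j : ℕ} (hj₀ : 0 < j) (hjr : j < r) :
    qbrk r (j - α) ≠ 0 := by
  have hr : r ≠ 0 := by omega
  rw [Ne, qbrk_eq_zero_iff hr]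
  rintro ⟨m, hm⟩
  rcases hα with hα | ⟨n, rfl⟩
  · exact hα ⟨j - r * m, by push_cast; linear_combination -hm⟩
  · refine qbrk_natCast_ne_zero hj₀ hjr ((qbrk_eq_zero_iff hr).mpr ⟨m + n, ?_⟩)
    push_cast
    linear_combination hm

lemma cE_ne_zero (hα : goodα r α) {j : ℕ} (hj₀ : 0 < j) (hjr : j < r) : cE r α j ≠ 0 :=
  div_ne_zero
    (mul_ne_zero (qbrk_natCast_ne_zero hj₀ hjr) (qbrk_natCast_sub_ne_zero hα hj₀ hjr))
    (pow_ne_zero 2 (qbrk_one_ne_zero (by omega)))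

lemma cE_zero (r : ℕ) (α : ℂ) : cE r α 0 = 0 := by
  simp [cE, qbrk]

lemma cE_self (r : ℕ) (α : ℂ) : cE r α r = 0 := by
  rcases eq_or_ne r 0 with rfl | hr
  · exact cE_zero 0 α
  · have hbrk : qbrk r r = 0 := (qbrk_eq_zero_iff hr).mpr ⟨1, by simp⟩
    simp [cE, hbrk]

lemma wt_succ (r : ℕ) (α : ℂ) (j : ℕ) : wt r α (j + 1) = wt r α j - 2 := by
  simp only [wt]
  push_cast
  ring

lemma cE_succ_sub_cE (hr : 2 ≤ r) (α : ℂ) (j : ℕ) :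
    cE r α (j + 1) - cE r α j = (qbrk r 1)⁻¹ * qbrk r (wt r α j) := by
  have hbrk := qbrk_one_ne_zero hr
  have hwt : wt r α j = r + (α - 1 - (j + j)) := by
    rw [wt]
    ring
  have hnum : qbrk r (j + 1) * qbrk r (j + 1 - α) - qbrk r j * qbrk r (j - α)
      = qbrk r 1 * qbrk r (wt r α j) := by
    have h₁ := qc_ne_zero r 1
    have hj := qc_ne_zero r j
    have hα := qc_ne_zero r α
    rw [hwt]
    simp only [qbrk, qc_neg, qc_sub, qc_add, qc_natCast_self (show r ≠ 0 by omega)]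
    field_simp
    ring
  rw [cE, cE, Nat.cast_succ, ← sub_div, hnum]
  field_simp

end QuantumNumbers

section UnrolledRelations

/-- Operators satisfying the defining relations of the unrolled quantum group `U_q^H(sl₂)`, that
is, those of `Rep` except the nilpotency relations `E ^ r = F ^ r = 0`. These relations are visibly
stable under tensor products, and they suffice for highest weight theory. -/
structure IsUnrolledRep (r : ℕ) (A : Ops V) : Prop where
  K_mul_Kinv : A.K * A.Kinv = 1
  Kinv_mul_K : A.Kinv * A.K = 1
  H_mul_K : A.H * A.K = A.K * A.H
  H_mul_E : A.H * A.E = A.E * A.H + (2 : ℂ) • A.E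
  H_mul_F : A.H * A.F = A.F * A.H + (-2 : ℂ) • A.F
  K_mul_E : A.K * A.E = qc r 2 • (A.E * A.K)
  K_mul_F : A.K * A.F = qc r (-2) • (A.F * A.K)
  E_mul_F : A.E * A.F = A.F * A.E + (qbrk r 1)⁻¹ • (A.K - A.Kinv)

namespace IsUnrolledRep

variable {r : ℕ} {A : Ops V} {B : Ops W}

lemma H_mul_Kinv (hA : IsUnrolledRep r A) : A.H * A.Kinv = A.Kinv * A.H := by
  calc A.H * A.Kinv = A.Kinv * (A.K * A.H) * A.Kinv := by
        rw [← mul_assoc A.Kinv, hA.Kinv_mul_K, one_mul]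
    _ = A.Kinv * A.H := by
        rw [← hA.H_mul_K, mul_assoc, mul_assoc, hA.K_mul_Kinv, mul_one]

lemma Kinv_mul_E (hA : IsUnrolledRep r A) : A.Kinv * A.E = qc r (-2) • (A.E * A.Kinv) := by
  calc A.Kinv * A.E = qc r (-2) • (A.Kinv * (qc r 2 • (A.E * A.K)) * A.Kinv) := by
        rw [mul_smul_comm, smul_mul_assoc, smul_smul, qc_neg, inv_mul_cancel₀ (qc_ne_zero r 2),
          one_smul, mul_assoc, mul_assoc, hA.K_mul_Kinv, mul_one]
    _ = qc r (-2) • (A.E * A.Kinv) := by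
        rw [← hA.K_mul_E, ← mul_assoc A.Kinv, hA.Kinv_mul_K, one_mul]

theorem tensorOps (hA : IsUnrolledRep r A) (hB : IsUnrolledRep r B) :
    IsUnrolledRep r (tensorOps A B) where
  K_mul_Kinv := by
    simp only [Unrolled.tensorOps, ← TensorProduct.map_mul, hA.K_mul_Kinv, hB.K_mul_Kinv,
      TensorProduct.map_one]
  Kinv_mul_K := by
    simp only [Unrolled.tensorOps, ← TensorProduct.map_mul, hA.Kinv_mul_K, hB.Kinv_mul_K,
      TensorProduct.map_one]
  H_mul_K := by
    simp only [Unrolled.tensorOps, ← Module.End.one_eq_id, mul_add, add_mul,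
      ← TensorProduct.map_mul, one_mul, mul_one, hA.H_mul_K, hB.H_mul_K]
  H_mul_E := by
    simp only [Unrolled.tensorOps, ← Module.End.one_eq_id, mul_add, add_mul,
      ← TensorProduct.map_mul, one_mul, mul_one, hA.H_mul_E, hB.H_mul_E, hB.H_mul_K,
      TensorProduct.map_add_left, TensorProduct.map_add_right, TensorProduct.map_smul_left,
      TensorProduct.map_smul_right, smul_add]
    abel
  H_mul_F := by
    simp only [Unrolled.tensorOps, ← Module.End.one_eq_id, mul_add, add_mul,
      ← TensorProduct.map_mul, one_mul, mul_one, hA.H_mul_F, hB.H_mul_F, hA.H_mul_Kinv,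
      TensorProduct.map_add_left, TensorProduct.map_add_right, TensorProduct.map_smul_left,
      TensorProduct.map_smul_right, smul_add]
    abel
  K_mul_E := by
    simp only [Unrolled.tensorOps, ← Module.End.one_eq_id, mul_add, add_mul,
      ← TensorProduct.map_mul, one_mul, mul_one, hA.K_mul_E, hB.K_mul_E,
      TensorProduct.map_smul_left, TensorProduct.map_smul_right, smul_add]
  K_mul_F := by
    simp only [Unrolled.tensorOps, ← Module.End.one_eq_id, mul_add, add_mul,
      ← TensorProduct.map_mul, one_mul, mul_one, hA.K_mul_F, hB.K_mul_F, hA.K_mul_Kinv,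
      hA.Kinv_mul_K, TensorProduct.map_smul_left, TensorProduct.map_smul_right, smul_add]
  E_mul_F := by
    have cartan : TensorProduct.map (A.K - A.Kinv) B.K + TensorProduct.map A.Kinv (B.K - B.Kinv)
        = TensorProduct.map A.K B.K - TensorProduct.map A.Kinv B.Kinv :=
      TensorProduct.ext' fun x y => by
        simp [TensorProduct.sub_tmul, TensorProduct.tmul_sub]
    simp only [Unrolled.tensorOps, ← Module.End.one_eq_id, mul_add, add_mul,
      ← TensorProduct.map_mul, one_mul, mul_one, hA.E_mul_F, hB.E_mul_F, hA.Kinv_mul_E,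
      hB.K_mul_F, TensorProduct.map_add_left, TensorProduct.map_add_right,
      TensorProduct.map_smul_left, TensorProduct.map_smul_right, ← cartan, smul_add]
    abel

end IsUnrolledRep

/-- A highest weight vector of weight `μ`: a nonzero vector killed by `E` on which `H` and `K` act
by `μ` and `q^μ`. -/
structure IsHighestWeightVector (r : ℕ) (A : Ops V) (μ : ℂ) (w : V) : Prop where
  ne_zero : w ≠ 0
  H_apply : A.H w = μ • w
  K_apply : A.K w = qc r μ • w
  E_apply : A.E w = 0

namespace IsHighestWeightVector

variable {r : ℕ} {A : Ops V} {α : ℂ} {w : V}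

lemma H_F_pow_apply (hw : IsHighestWeightVector r A (wt r α 0) w) (hA : IsUnrolledRep r A)
    (j : ℕ) : A.H ((A.F ^ j) w) = wt r α j • (A.F ^ j) w := by
  induction j with
  | zero => simpa using hw.H_apply
  | succ j ih =>
    rw [pow_succ', Module.End.mul_apply, ← Module.End.mul_apply A.H, hA.H_mul_F,
      LinearMap.add_apply, Module.End.mul_apply, ih, LinearMap.smul_apply, map_smul, ← add_smul,
      wt_succ, sub_eq_add_neg]

lemma K_F_pow_apply (hw : IsHighestWeightVector r A (wt r α 0) w) (hA : IsUnrolledRep r A)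
    (j : ℕ) : A.K ((A.F ^ j) w) = qc r (wt r α j) • (A.F ^ j) w := by
  induction j with
  | zero => simpa using hw.K_apply
  | succ j ih =>
    rw [pow_succ', Module.End.mul_apply, ← Module.End.mul_apply A.K, hA.K_mul_F,
      LinearMap.smul_apply, Module.End.mul_apply, ih, map_smul, smul_smul, ← qc_add, wt_succ,
      neg_add_eq_sub]

lemma Kinv_F_pow_apply (hw : IsHighestWeightVector r A (wt r α 0) w) (hA : IsUnrolledRep r A)
    (j : ℕ) : A.Kinv ((A.F ^ j) w) = qc r (-wt r α j) • (A.F ^ j) w := by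
  rw [qc_neg, eq_inv_smul_iff₀ (qc_ne_zero _ _), ← map_smul, ← hw.K_F_pow_apply hA,
    ← Module.End.mul_apply, hA.Kinv_mul_K, Module.End.one_apply]

lemma E_F_pow_succ_apply (hr : 2 ≤ r) (hw : IsHighestWeightVector r A (wt r α 0) w)
    (hA : IsUnrolledRep r A) (j : ℕ) :
    A.E ((A.F ^ (j + 1)) w) = cE r α (j + 1) • (A.F ^ j) w := by
  have step (j : ℕ) (hFE : A.F (A.E ((A.F ^ j) w)) = cE r α j • (A.F ^ j) w) :
      A.E ((A.F ^ (j + 1)) w) = cE r α (j + 1) • (A.F ^ j) w := by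
    calc A.E ((A.F ^ (j + 1)) w)
        = A.F (A.E ((A.F ^ j) w))
            + (qbrk r 1)⁻¹ • (A.K ((A.F ^ j) w) - A.Kinv ((A.F ^ j) w)) := by
          rw [pow_succ', Module.End.mul_apply, ← Module.End.mul_apply A.E, hA.E_mul_F]
          rfl
      _ = (cE r α j + (qbrk r 1)⁻¹ * qbrk r (wt r α j)) • (A.F ^ j) w := by
          rw [hFE, hw.K_F_pow_apply hA, hw.Kinv_F_pow_apply hA, ← sub_smul, smul_smul,
            ← add_smul, ← qbrk]
      _ = cE r α (j + 1) • (A.F ^ j) w := by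
          rw [← cE_succ_sub_cE hr, add_sub_cancel]
  induction j with
  | zero => exact step 0 (by simp [hw.E_apply, cE_zero])
  | succ j ih =>
    refine step (j + 1) ?_
    rw [ih, map_smul, pow_succ', Module.End.mul_apply]

end IsHighestWeightVector

end UnrolledRelations

section VermaModules

variable {r : ℕ} {α : ℂ}

/-- The basis vector `v_k` of a Verma module, with the convention `v_k = 0` for `k ≥ r`. -/
def basisVec (r k : ℕ) : Fin r → ℂ := fun i => if (i : ℕ) = k then 1 else 0

lemma basisVec_of_lt {k : ℕ} (hk : k < r) : basisVec r k = Pi.single ⟨k, hk⟩ 1 := by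
  ext i
  simp [basisVec, Pi.single_apply, Fin.ext_iff]

lemma basisVec_eq_zero {k : ℕ} (hk : r ≤ k) : basisVec r k = 0 := by
  ext i
  exact if_neg (i.isLt.trans_le hk).ne

lemma basisVec_ne_zero {k : ℕ} (hk : k < r) : basisVec r k ≠ 0 :=
  fun h => by simpa [basisVec] using congrFun h ⟨k, hk⟩

lemma sum_smul_basisVec (x : Fin r → ℂ) : ∑ i, x i • basisVec r i = x := by
  ext j
  simp [basisVec, Fin.val_inj]

lemma linearMap_ext_basisVec {f g : (Fin r → ℂ) →ₗ[ℂ] V}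
    (h : ∀ k < r, f (basisVec r k) = g (basisVec r k)) : f = g :=
  (Pi.basisFun ℂ (Fin r)).ext fun i => by
    simpa only [Pi.basisFun_apply, basisVec_of_lt i.isLt] using h i i.isLt

lemma vermaOps_K_basisVec (r : ℕ) (α : ℂ) (k : ℕ) :
    (vermaOps r α).K (basisVec r k) = qc r (wt r α k) • basisVec r k := by
  ext i
  by_cases hik : (i : ℕ) = k <;> simp [vermaOps, Matrix.mulVec_diagonal, basisVec, hik]

lemma vermaOps_Kinv_basisVec (r : ℕ) (α : ℂ) (k : ℕ) :
    (vermaOps r α).Kinv (basisVec r k) = qc r (-wt r α k) • basisVec r k := by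
  ext i
  by_cases hik : (i : ℕ) = k <;> simp [vermaOps, Matrix.mulVec_diagonal, basisVec, hik]

lemma vermaOps_H_basisVec (r : ℕ) (α : ℂ) (k : ℕ) :
    (vermaOps r α).H (basisVec r k) = wt r α k • basisVec r k := by
  ext i
  by_cases hik : (i : ℕ) = k <;> simp [vermaOps, Matrix.mulVec_diagonal, basisVec, hik]

lemma vermaOps_E_basisVec_zero (r : ℕ) (α : ℂ) : (vermaOps r α).E (basisVec r 0) = 0 := by
  rcases r.eq_zero_or_pos with rfl | hr
  · exact Subsingleton.elim _ _
  · ext i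
    simp [basisVec_of_lt hr, vermaOps]

lemma vermaOps_E_basisVec_succ (r : ℕ) (α : ℂ) (k : ℕ) :
    (vermaOps r α).E (basisVec r (k + 1)) = cE r α (k + 1) • basisVec r k := by
  rcases lt_trichotomy (k + 1) r with hk | rfl | hk
  · ext i
    simp [basisVec_of_lt hk, vermaOps, basisVec, eq_comm]
  · rw [basisVec_eq_zero le_rfl, map_zero, cE_self, zero_smul]
  · rw [basisVec_eq_zero hk.le, basisVec_eq_zero (by omega), map_zero, smul_zero]

lemma vermaOps_F_basisVec (r : ℕ) (α : ℂ) (k : ℕ) :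
    (vermaOps r α).F (basisVec r k) = basisVec r (k + 1) := by
  rcases lt_or_ge k r with hk | hk
  · ext i
    simp [basisVec_of_lt hk, vermaOps, basisVec]
  · rw [basisVec_eq_zero hk, basisVec_eq_zero (by omega), map_zero]

lemma vermaOps_E_pow_basisVec_of_lt (r : ℕ) (α : ℂ) {n k : ℕ} (hkn : k < n) :
    ((vermaOps r α).E ^ n) (basisVec r k) = 0 := by
  induction n generalizing k with
  | zero => omega
  | succ n ih =>
    rw [pow_succ, Module.End.mul_apply]
    cases k with
    | zero => rw [vermaOps_E_basisVec_zero, map_zero]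
    | succ k => rw [vermaOps_E_basisVec_succ, map_smul, ih (by omega), smul_zero]

lemma vermaOps_E_pow_self (r : ℕ) (α : ℂ) : (vermaOps r α).E ^ r = 0 :=
  linearMap_ext_basisVec fun _ hk => vermaOps_E_pow_basisVec_of_lt r α hk

lemma vermaOps_F_E_basisVec (r : ℕ) (α : ℂ) (k : ℕ) :
    (vermaOps r α).F ((vermaOps r α).E (basisVec r k)) = cE r α k • basisVec r k := by
  cases k with
  | zero => rw [vermaOps_E_basisVec_zero, map_zero, cE_zero, zero_smul]
  | succ k => rw [vermaOps_E_basisVec_succ, map_smul, vermaOps_F_basisVec]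

theorem isUnrolledRep_vermaOps (hr : 2 ≤ r) (α : ℂ) : IsUnrolledRep r (vermaOps r α) where
  K_mul_Kinv := linearMap_ext_basisVec fun k _ => by
    simp only [Module.End.mul_apply, vermaOps_K_basisVec, vermaOps_Kinv_basisVec, map_smul,
      smul_smul, ← qc_add, neg_add_cancel, qc_zero, one_smul, Module.End.one_apply]
  Kinv_mul_K := linearMap_ext_basisVec fun k _ => by
    simp only [Module.End.mul_apply, vermaOps_K_basisVec, vermaOps_Kinv_basisVec, map_smul,
      smul_smul, ← qc_add, add_neg_cancel, qc_zero, one_smul, Module.End.one_apply]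
  H_mul_K := linearMap_ext_basisVec fun k _ => by
    simp only [Module.End.mul_apply, vermaOps_H_basisVec, vermaOps_K_basisVec, map_smul,
      smul_smul, mul_comm]
  H_mul_E := linearMap_ext_basisVec fun k _ => by
    cases k with
    | zero => simp [vermaOps_E_basisVec_zero, vermaOps_H_basisVec]
    | succ k =>
      simp only [Module.End.mul_apply, LinearMap.add_apply, LinearMap.smul_apply,
        vermaOps_E_basisVec_succ, vermaOps_H_basisVec, map_smul, smul_smul, ← add_smul, wt_succ]
      ring_nf
  H_mul_F := linearMap_ext_basisVec fun k _ => by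
    simp only [Module.End.mul_apply, LinearMap.add_apply, LinearMap.smul_apply,
      vermaOps_F_basisVec, vermaOps_H_basisVec, map_smul, ← add_smul, wt_succ, sub_eq_add_neg]
  K_mul_E := linearMap_ext_basisVec fun k _ => by
    cases k with
    | zero => simp [vermaOps_E_basisVec_zero, vermaOps_K_basisVec]
    | succ k =>
      simp only [Module.End.mul_apply, LinearMap.smul_apply, vermaOps_E_basisVec_succ,
        vermaOps_K_basisVec, map_smul, smul_smul, wt_succ]
      rw [← mul_assoc, ← qc_add, add_sub_cancel, mul_comm]
  K_mul_F := linearMap_ext_basisVec fun k _ => by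
    simp only [Module.End.mul_apply, LinearMap.smul_apply, vermaOps_F_basisVec,
      vermaOps_K_basisVec, map_smul, smul_smul, ← qc_add, wt_succ, neg_add_eq_sub]
  E_mul_F := linearMap_ext_basisVec fun k _ => by
    have hcE : cE r α (k + 1)
        = cE r α k + (qbrk r 1)⁻¹ * (qc r (wt r α k) - qc r (-wt r α k)) := by
      rw [← qbrk, ← cE_succ_sub_cE hr, add_sub_cancel]
    simp only [Module.End.mul_apply, LinearMap.add_apply, LinearMap.smul_apply,
      LinearMap.sub_apply, vermaOps_F_basisVec, vermaOps_E_basisVec_succ, vermaOps_F_E_basisVec,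
      vermaOps_K_basisVec, vermaOps_Kinv_basisVec, ← sub_smul, smul_smul, ← add_smul, hcE]

/-- The `k`-th coordinate of a vector of a Verma module, with the convention that it vanishes for
`k ≥ r`. -/
def coord (r k : ℕ) : Module.Dual ℂ (Fin r → ℂ) :=
  if hk : k < r then LinearMap.proj ⟨k, hk⟩ else 0

lemma coord_of_lt {k : ℕ} (hk : k < r) (x : Fin r → ℂ) : coord r k x = x ⟨k, hk⟩ := by
  simp [coord, hk]

lemma coord_eq_zero {k : ℕ} (hk : r ≤ k) : coord r k = 0 :=
  dif_neg hk.not_gt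

lemma coord_basisVec {j : ℕ} (hj : j < r) (k : ℕ) :
    coord r k (basisVec r j) = if k = j then 1 else 0 := by
  rcases lt_or_ge k r with hk | hk
  · rw [coord_of_lt hk, basisVec]
  · rw [coord_eq_zero hk, LinearMap.zero_apply, if_neg (by omega)]

lemma coord_vermaOps_H (α : ℂ) (k : ℕ) (x : Fin r → ℂ) :
    coord r k ((vermaOps r α).H x) = wt r α k * coord r k x := by
  rcases lt_or_ge k r with hk | hk
  · simp [coord_of_lt hk, vermaOps, Matrix.mulVec_diagonal]
  · simp [coord_eq_zero hk]

lemma coord_vermaOps_K (α : ℂ) (k : ℕ) (x : Fin r → ℂ) :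
    coord r k ((vermaOps r α).K x) = qc r (wt r α k) * coord r k x := by
  rcases lt_or_ge k r with hk | hk
  · simp [coord_of_lt hk, vermaOps, Matrix.mulVec_diagonal]
  · simp [coord_eq_zero hk]

lemma coord_vermaOps_E (α : ℂ) (k : ℕ) (x : Fin r → ℂ) :
    coord r k ((vermaOps r α).E x) = cE r α (k + 1) * coord r (k + 1) x := by
  suffices h : coord r k ∘ₗ (vermaOps r α).E = cE r α (k + 1) • coord r (k + 1) from
    LinearMap.congr_fun h x
  refine linearMap_ext_basisVec fun j hj => ?_
  cases j with
  | zero => simp [vermaOps_E_basisVec_zero, coord_basisVec hj]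
  | succ j =>
    by_cases hkj : k = j <;>
      simp [vermaOps_E_basisVec_succ, coord_basisVec hj, coord_basisVec (Nat.lt_of_succ_lt hj),
        hkj]

lemma eq_smul_basisVec_zero_of_vermaOps_E_eq_zero (hα : goodα r α) {x : Fin r → ℂ}
    (hx : (vermaOps r α).E x = 0) : x = coord r 0 x • basisVec r 0 := by
  ext ⟨k, hk⟩
  cases k with
  | zero => simp [coord_of_lt hk, basisVec]
  | succ k =>
    have hE : cE r α (k + 1) * x ⟨k + 1, hk⟩ = 0 := by
      rw [← coord_of_lt hk x, ← coord_vermaOps_E, hx, map_zero]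
    simpa [basisVec] using (mul_eq_zero.mp hE).resolve_left (cE_ne_zero hα k.succ_pos hk)

theorem isSimple_vermaOps (hr : 0 < r) (hα : goodα r α) : (vermaOps r α).IsSimple := by
  refine ⟨⟨basisVec r 0, basisVec_ne_zero hr⟩, fun p ⟨_, _, _, hE, hF⟩ => ?_⟩
  refine or_iff_not_imp_left.mpr fun hp => Submodule.eq_top_iff'.mpr fun y => ?_
  obtain ⟨x, hxp, hx₀, hEx⟩ :=
    exists_mem_ne_zero_apply_eq_zero ⟨r, vermaOps_E_pow_self r α⟩ hE hp
  have hx := eq_smul_basisVec_zero_of_vermaOps_E_eq_zero hα hEx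
  have hc : coord r 0 x ≠ 0 := fun hc => hx₀ (by rw [hx, hc, zero_smul])
  have hv₀ : basisVec r 0 ∈ p := (p.smul_mem_iff hc).mp (hx ▸ hxp)
  have hv (k : ℕ) : basisVec r k ∈ p := by
    induction k with
    | zero => exact hv₀
    | succ k ih => exact vermaOps_F_basisVec r α k ▸ hF _ ih
  rw [← sum_smul_basisVec y]
  exact p.sum_mem fun i _ => p.smul_mem _ (hv i)

end VermaModules
section HighestWeightDecomposition

variable {r : ℕ}

/-- The linear map `V_α → V` sending `v_j` to `F ^ j w`; it realizes the universal property of the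
Verma module `V_α` when `w` is a highest weight vector of weight `α + r - 1` with `F ^ r w = 0`. -/
def vermaLift (r : ℕ) (A : Ops V) (w : V) : (Fin r → ℂ) →ₗ[ℂ] V :=
  Fintype.linearCombination ℂ fun j : Fin r => (A.F ^ (j : ℕ)) w

lemma vermaLift_basisVec {A : Ops V} {w : V} (hF : (A.F ^ r) w = 0) (k : ℕ) :
    vermaLift r A w (basisVec r k) = (A.F ^ k) w := by
  rcases lt_or_ge k r with hk | hk
  · rw [basisVec_of_lt hk, vermaLift, Fintype.linearCombination_apply_single, one_smul]
  · rw [basisVec_eq_zero hk, map_zero, ← Nat.sub_add_cancel hk, pow_add, Module.End.mul_apply,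
      hF, map_zero]

theorem isEquivariant_vermaLift (hr : 2 ≤ r) {α : ℂ} {A : Ops V} (hA : IsUnrolledRep r A) {w : V}
    (hw : IsHighestWeightVector r A (wt r α 0) w) (hF : (A.F ^ r) w = 0) :
    IsEquivariant (vermaOps r α) A (vermaLift r A w) := by
  have hΦ := vermaLift_basisVec hF
  have ext_basis {S : Module.End ℂ (Fin r → ℂ)} {T : Module.End ℂ V}
      (h : ∀ k, vermaLift r A w (S (basisVec r k)) = T (vermaLift r A w (basisVec r k))) :
      ∀ x, vermaLift r A w (S x) = T (vermaLift r A w x) :=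
    LinearMap.congr_fun (linearMap_ext_basisVec (f := vermaLift r A w ∘ₗ S)
      (g := T ∘ₗ vermaLift r A w) fun k _ => h k)
  refine ⟨ext_basis fun k => ?_, ext_basis fun k => ?_, ext_basis fun k => ?_,
    ext_basis fun k => ?_, ext_basis fun k => ?_⟩
  · rw [vermaOps_K_basisVec, map_smul, hΦ, hw.K_F_pow_apply hA]
  · rw [vermaOps_Kinv_basisVec, map_smul, hΦ, hw.Kinv_F_pow_apply hA]
  · rw [vermaOps_H_basisVec, map_smul, hΦ, hw.H_F_pow_apply hA]
  · cases k with
    | zero => rw [vermaOps_E_basisVec_zero, map_zero, hΦ, pow_zero, Module.End.one_apply,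
        hw.E_apply]
    | succ k => rw [vermaOps_E_basisVec_succ, map_smul, hΦ, hΦ, hw.E_F_pow_succ_apply hr hA]
  · rw [vermaOps_F_basisVec, hΦ, hΦ, pow_succ', Module.End.mul_apply]

lemma isEquivariant_sum_comp_proj {ι : Type} [Fintype ι] {Vf : ι → Type}
    [∀ i, AddCommGroup (Vf i)] [∀ i, Module ℂ (Vf i)] {A : ∀ i, Ops (Vf i)} {B : Ops W}
    {f : ∀ i, Vf i →ₗ[ℂ] W} (hf : ∀ i, IsEquivariant (A i) B (f i)) :
    IsEquivariant (piOps A) B (∑ i, f i ∘ₗ LinearMap.proj i) := by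
  refine ⟨fun x => ?_, fun x => ?_, fun x => ?_, fun x => ?_, fun x => ?_⟩ <;>
    simp only [LinearMap.sum_apply, LinearMap.comp_apply, LinearMap.proj_apply, map_sum] <;>
    refine Finset.sum_congr rfl fun i _ => ?_
  · exact (hf i).1 (x i)
  · exact (hf i).2.1 (x i)
  · exact (hf i).2.2.1 (x i)
  · exact (hf i).2.2.2.1 (x i)
  · exact (hf i).2.2.2.2 (x i)

lemma OpsIso.symm {A : Ops V} {B : Ops W} : OpsIso A B → OpsIso B A := by
  rintro ⟨e, hK, hKinv, hH, hE, hF⟩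
  refine ⟨e.symm, fun w => ?_, fun w => ?_, fun w => ?_, fun w => ?_, fun w => ?_⟩ <;>
    refine e.injective ?_ <;> simp_all

lemma piOps_E_pow_apply {ι : Type} {Vf : ι → Type} [∀ i, AddCommGroup (Vf i)]
    [∀ i, Module ℂ (Vf i)] (A : ∀ i, Ops (Vf i)) (n : ℕ) (x : ∀ i, Vf i) (i : ι) :
    ((piOps A).E ^ n) x i = ((A i).E ^ n) (x i) := by
  induction n generalizing x with
  | zero => rfl
  | succ n ih => simp only [pow_succ, Module.End.mul_apply, ih]; rfl

variable {ι : Type} [Fintype ι] {A : Ops V} {α : ι → ℂ} {w : ι → V}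

theorem ker_sum_vermaLift_comp_proj (hr : 2 ≤ r) (hA : IsUnrolledRep r A)
    (hα : ∀ i, goodα r (α i)) (hw : ∀ i, IsHighestWeightVector r A (wt r (α i) 0) (w i))
    (hF : ∀ i, (A.F ^ r) (w i) = 0) (hli : LinearIndependent ℂ w) :
    LinearMap.ker (∑ i, vermaLift r A (w i) ∘ₗ LinearMap.proj i) = ⊥ := by
  set Φ := ∑ i, vermaLift r A (w i) ∘ₗ LinearMap.proj i
  have hΦ : IsEquivariant (piOps fun i => vermaOps r (α i)) A Φ :=
    isEquivariant_sum_comp_proj fun i => isEquivariant_vermaLift hr hA (hw i) (hF i)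
  have hnil : IsNilpotent (piOps fun i => vermaOps r (α i)).E :=
    ⟨r, LinearMap.ext fun x => funext fun i => by
      rw [piOps_E_pow_apply, vermaOps_E_pow_self]; rfl⟩
  by_contra hker
  obtain ⟨x, hΦx, hx₀, hEx⟩ := exists_mem_ne_zero_apply_eq_zero hnil
    (fun x hx => by rw [LinearMap.mem_ker, hΦ.2.2.2.1, LinearMap.mem_ker.mp hx, map_zero]) hker
  have hx (i : ι) : x i = coord r 0 (x i) • basisVec r 0 :=
    eq_smul_basisVec_zero_of_vermaOps_E_eq_zero (hα i) (congrFun hEx i)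
  have hsum : ∑ i, coord r 0 (x i) • w i = 0 := by
    rw [← LinearMap.mem_ker.mp hΦx, LinearMap.sum_apply]
    refine Finset.sum_congr rfl fun i _ => ?_
    rw [LinearMap.comp_apply, LinearMap.proj_apply]
    conv_rhs => rw [hx i]
    rw [map_smul, vermaLift_basisVec (hF i), pow_zero, Module.End.one_apply]
  refine hx₀ (funext fun i => ?_)
  rw [hx i, Fintype.linearIndependent_iff.mp hli _ hsum i, zero_smul, Pi.zero_apply]

theorem opsIso_piOps_vermaOps [FiniteDimensional ℂ V] (hr : 2 ≤ r) (hA : IsUnrolledRep r A)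
    (hα : ∀ i, goodα r (α i)) (hw : ∀ i, IsHighestWeightVector r A (wt r (α i) 0) (w i))
    (hF : ∀ i, (A.F ^ r) (w i) = 0) (hli : LinearIndependent ℂ w)
    (hdim : Module.finrank ℂ V = Fintype.card ι * r) :
    OpsIso A (piOps fun i => vermaOps r (α i)) := by
  have hrank : Module.finrank ℂ (ι → Fin r → ℂ) = Module.finrank ℂ V := by
    rw [hdim, Module.finrank_pi_fintype]
    simp
  exact OpsIso.symm ⟨LinearEquiv.ofInjectiveOfFinrankEq _
    (LinearMap.ker_eq_bot.mp (ker_sum_vermaLift_comp_proj hr hA hα hw hF hli)) hrank,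
    isEquivariant_sum_comp_proj fun i => isEquivariant_vermaLift hr hA (hw i) (hF i)⟩

lemma linearIndependent_of_isHighestWeightVector {ι : Type} {μ : ι → ℂ} {w : ι → V}
    (hμ : Function.Injective μ) (hw : ∀ i, IsHighestWeightVector r A (μ i) (w i)) :
    LinearIndependent ℂ w :=
  Module.End.eigenvectors_linearIndependent' A.H μ hμ w fun i =>
    Module.End.hasEigenvector_iff.mpr
      ⟨Module.End.mem_eigenspace_iff.mpr (hw i).H_apply, (hw i).ne_zero⟩

end HighestWeightDecomposition

section TensorProducts

variable {r : ℕ}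

/-- The coordinate functional of `v_k ⊗ v_l` on a tensor product of two Verma modules, with the
convention that it vanishes for `k ≥ r` or `l ≥ r`. -/
def tensorCoord (r k l : ℕ) : Module.Dual ℂ ((Fin r → ℂ) ⊗[ℂ] (Fin r → ℂ)) :=
  TensorProduct.dualDistrib ℂ _ _ (coord r k ⊗ₜ coord r l)

lemma tensorCoord_tmul (k l : ℕ) (x y : Fin r → ℂ) :
    tensorCoord r k l (x ⊗ₜ y) = coord r k x * coord r l y :=
  TensorProduct.dualDistrib_apply _ _ _ _

lemma tensorCoord_eq_zero_of_le_left {k : ℕ} (hk : r ≤ k) (l : ℕ) : tensorCoord r k l = 0 := by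
  rw [tensorCoord, coord_eq_zero hk, TensorProduct.zero_tmul, map_zero]

lemma tensorCoord_eq_zero_of_le_right (k : ℕ) {l : ℕ} (hl : r ≤ l) : tensorCoord r k l = 0 := by
  rw [tensorCoord, coord_eq_zero hl, TensorProduct.tmul_zero, map_zero]

lemma eq_zero_of_tensorCoord_eq_zero {x : (Fin r → ℂ) ⊗[ℂ] (Fin r → ℂ)}
    (hx : ∀ k l, tensorCoord r k l x = 0) : x = 0 := by
  let b := (Pi.basisFun ℂ (Fin r)).tensorProduct (Pi.basisFun ℂ (Fin r))
  have hcoord (i j : Fin r) : b.coord (i, j) = tensorCoord r i j :=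
    TensorProduct.ext' fun y z => by
      simp [b, tensorCoord_tmul, coord_of_lt, Module.Basis.tensorProduct_repr_tmul_apply, mul_comm]
  exact b.forall_coord_eq_zero_iff.mp fun ⟨i, j⟩ => by rw [hcoord, hx]

lemma tensorCoord_tensorOps_H (α β : ℂ) (k l : ℕ) (x : (Fin r → ℂ) ⊗[ℂ] (Fin r → ℂ)) :
    tensorCoord r k l ((tensorOps (vermaOps r α) (vermaOps r β)).H x)
      = (wt r α k + wt r β l) * tensorCoord r k l x := by
  suffices h : tensorCoord r k l ∘ₗ (tensorOps (vermaOps r α) (vermaOps r β)).H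
      = (wt r α k + wt r β l) • tensorCoord r k l from LinearMap.congr_fun h x
  refine TensorProduct.ext' fun y z => ?_
  simp only [LinearMap.comp_apply, tensorOps, LinearMap.add_apply, TensorProduct.map_tmul,
    LinearMap.id_apply, map_add, tensorCoord_tmul, coord_vermaOps_H, LinearMap.smul_apply,
    smul_eq_mul]
  ring

lemma tensorCoord_tensorOps_E (α β : ℂ) (k l : ℕ) (x : (Fin r → ℂ) ⊗[ℂ] (Fin r → ℂ)) :
    tensorCoord r k l ((tensorOps (vermaOps r α) (vermaOps r β)).E x)
      = cE r β (l + 1) * tensorCoord r k (l + 1) x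
        + cE r α (k + 1) * qc r (wt r β l) * tensorCoord r (k + 1) l x := by
  suffices h : tensorCoord r k l ∘ₗ (tensorOps (vermaOps r α) (vermaOps r β)).E
      = cE r β (l + 1) • tensorCoord r k (l + 1)
        + (cE r α (k + 1) * qc r (wt r β l)) • tensorCoord r (k + 1) l from
    LinearMap.congr_fun h x
  refine TensorProduct.ext' fun y z => ?_
  simp only [LinearMap.comp_apply, tensorOps, LinearMap.add_apply, TensorProduct.map_tmul,
    LinearMap.id_apply, map_add, tensorCoord_tmul, coord_vermaOps_E, coord_vermaOps_K,
    LinearMap.smul_apply, smul_eq_mul]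
  ring

/-- The equation `E x = 0` expresses the coordinate at `(k, l + 1)` through the one at
`(k + 1, l)`, so vanishing propagates along the antidiagonal from `(r, k + l - r)`. -/
lemma tensorCoord_eq_zero_of_E_eq_zero {α β : ℂ} (hβ : goodα r β)
    {x : (Fin r → ℂ) ⊗[ℂ] (Fin r → ℂ)} (hx : (tensorOps (vermaOps r α) (vermaOps r β)).E x = 0)
    {k l : ℕ} (hkl : r ≤ k + l) : tensorCoord r k l x = 0 := by
  induction l generalizing k with
  | zero => rw [tensorCoord_eq_zero_of_le_left (by simpa using hkl), LinearMap.zero_apply]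
  | succ l ih =>
    rcases lt_or_ge (l + 1) r with hl | hl
    · have hE := tensorCoord_tensorOps_E α β k l x
      rw [hx, map_zero, ih (by omega), mul_zero, add_zero] at hE
      exact (mul_eq_zero.mp hE.symm).resolve_left (cE_ne_zero hβ l.succ_pos hl)
    · rw [tensorCoord_eq_zero_of_le_right k hl, LinearMap.zero_apply]

end TensorProducts

section HighestWeightVectors

open Finset.HasAntidiagonal (antidiagonal mem_antidiagonal)

variable {r : ℕ} {α β : ℂ}

lemma tensorOps_E_sum_antidiagonal {A : Ops V} {B : Ops W} {a : ℕ → V} {b : ℕ → W} {n : ℕ}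
    (ha₀ : A.E (a 0) = 0) (ha : ∀ k < n, A.E (a (k + 1)) = -a k)
    (hb₀ : B.E (b 0) = 0) (hb : ∀ l < n, B.E (b (l + 1)) = B.K (b l)) :
    (tensorOps A B).E (∑ p ∈ antidiagonal n, a p.1 ⊗ₜ b p.2) = 0 := by
  have hE (x : V) (y : W) : (tensorOps A B).E (x ⊗ₜ y) = x ⊗ₜ B.E y + A.E x ⊗ₜ B.K y := rfl
  simp only [map_sum, hE, Finset.sum_add_distrib]
  cases n with
  | zero => simp [ha₀, hb₀]
  | succ n =>
    rw [Finset.Nat.sum_antidiagonal_succ', Finset.Nat.sum_antidiagonal_succ]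
    simp only [ha₀, hb₀, TensorProduct.tmul_zero, TensorProduct.zero_tmul, zero_add]
    rw [← Finset.sum_add_distrib]
    refine Finset.sum_eq_zero fun p hp => ?_
    have hp' := mem_antidiagonal.mp hp
    rw [ha p.1 (by omega), hb p.2 (by omega), TensorProduct.neg_tmul, add_neg_cancel]

/-- The multiple `a_k` of `v_k ∈ V_α` normalized by `E a_{k+1} = -a_k`. -/
def hwLeft (r : ℕ) (α : ℂ) (k : ℕ) : Fin r → ℂ :=
  (∏ m ∈ Finset.range k, -(cE r α (m + 1))⁻¹) • basisVec r k

/-- The multiple `b_l` of `v_l ∈ V_β` normalized by `E b_{l+1} = K b_l`. -/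
def hwRight (r : ℕ) (β : ℂ) (l : ℕ) : Fin r → ℂ :=
  (∏ m ∈ Finset.range l, qc r (wt r β m) / cE r β (m + 1)) • basisVec r l

/-- The vector `∑_{k+l=n} a_k ⊗ b_l` of `V_α ⊗ V_β`: since `E` acts by `1 ⊗ E + E ⊗ K`, the
normalizations of `hwLeft` and `hwRight` make its image under `E` telescope to zero. -/
def hwVec (r : ℕ) (α β : ℂ) (n : ℕ) : (Fin r → ℂ) ⊗[ℂ] (Fin r → ℂ) :=
  ∑ p ∈ antidiagonal n, hwLeft r α p.1 ⊗ₜ hwRight r β p.2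

lemma vermaOps_E_hwLeft_succ (hα : goodα r α) {k : ℕ} (hk : k + 1 < r) :
    (vermaOps r α).E (hwLeft r α (k + 1)) = -hwLeft r α k := by
  have hc := cE_ne_zero hα k.succ_pos hk
  rw [hwLeft, hwLeft, map_smul, vermaOps_E_basisVec_succ, smul_smul, Finset.prod_range_succ,
    mul_assoc, neg_mul, inv_mul_cancel₀ hc, mul_neg_one, neg_smul]

lemma vermaOps_E_hwRight_succ (hβ : goodα r β) {l : ℕ} (hl : l + 1 < r) :
    (vermaOps r β).E (hwRight r β (l + 1)) = (vermaOps r β).K (hwRight r β l) := by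
  have hc := cE_ne_zero hβ l.succ_pos hl
  rw [hwRight, hwRight, map_smul, map_smul, vermaOps_E_basisVec_succ, vermaOps_K_basisVec,
    smul_smul, smul_smul, Finset.prod_range_succ, mul_assoc, div_mul_cancel₀ _ hc]

lemma wt_add_wt_of_mem_antidiagonal (r : ℕ) (α β : ℂ) {n : ℕ} {p : ℕ × ℕ}
    (hp : p ∈ antidiagonal n) : wt r α p.1 + wt r β p.2 = wt r α 0 + wt r β n := by
  rw [← mem_antidiagonal.mp hp]
  simp only [wt]
  push_cast
  ring

lemma tensorOps_H_hwVec (r : ℕ) (α β : ℂ) (n : ℕ) :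
    (tensorOps (vermaOps r α) (vermaOps r β)).H (hwVec r α β n)
      = (wt r α 0 + wt r β n) • hwVec r α β n := by
  rw [hwVec, map_sum, Finset.smul_sum]
  refine Finset.sum_congr rfl fun p hp => ?_
  rw [← wt_add_wt_of_mem_antidiagonal r α β hp]
  simp only [tensorOps, LinearMap.add_apply, TensorProduct.map_tmul, LinearMap.id_apply, hwLeft,
    hwRight, map_smul, vermaOps_H_basisVec, TensorProduct.tmul_smul, ← TensorProduct.smul_tmul']
  module

lemma tensorOps_K_hwVec (r : ℕ) (α β : ℂ) (n : ℕ) :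
    (tensorOps (vermaOps r α) (vermaOps r β)).K (hwVec r α β n)
      = qc r (wt r α 0 + wt r β n) • hwVec r α β n := by
  rw [hwVec, map_sum, Finset.smul_sum]
  refine Finset.sum_congr rfl fun p hp => ?_
  rw [← wt_add_wt_of_mem_antidiagonal r α β hp, qc_add]
  simp only [tensorOps, TensorProduct.map_tmul, hwLeft, hwRight, map_smul, vermaOps_K_basisVec,
    TensorProduct.tmul_smul, ← TensorProduct.smul_tmul']
  module

lemma tensorOps_E_hwVec (hα : goodα r α) (hβ : goodα r β) {n : ℕ} (hn : n < r) :
    (tensorOps (vermaOps r α) (vermaOps r β)).E (hwVec r α β n) = 0 :=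
  tensorOps_E_sum_antidiagonal
    (by simp [hwLeft, vermaOps_E_basisVec_zero])
    (fun k hk => vermaOps_E_hwLeft_succ hα (by omega))
    (by simp [hwRight, vermaOps_E_basisVec_zero])
    (fun l hl => vermaOps_E_hwRight_succ hβ (by omega))

lemma hwVec_ne_zero (hβ : goodα r β) {n : ℕ} (hn : n < r) : hwVec r α β n ≠ 0 := by
  have hcoord : tensorCoord r 0 n (hwVec r α β n)
      = ∏ m ∈ Finset.range n, qc r (wt r β m) / cE r β (m + 1) := by
    rw [hwVec, map_sum, Finset.sum_eq_single (0, n)]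
    · simp [tensorCoord_tmul, hwLeft, hwRight, coord_basisVec hn,
        coord_basisVec (Nat.zero_lt_of_lt hn)]
    · intro p hp hp₀
      have hsum := mem_antidiagonal.mp hp
      have hp₁ : 0 ≠ p.1 := fun h => hp₀ (Prod.ext h.symm (by omega))
      simp [tensorCoord_tmul, hwLeft, coord_basisVec (show p.1 < r by omega), hp₁]
    · simp
  intro h
  rw [h, map_zero] at hcoord
  refine Finset.prod_ne_zero_iff.mpr (fun m hm => ?_) hcoord.symm
  have hm := Finset.mem_range.mp hm
  exact div_ne_zero (qc_ne_zero _ _) (cE_ne_zero hβ m.succ_pos (by omega))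

theorem isHighestWeightVector_hwVec (hα : goodα r α) (hβ : goodα r β) {n : ℕ} (hn : n < r) :
    IsHighestWeightVector r (tensorOps (vermaOps r α) (vermaOps r β)) (wt r α 0 + wt r β n)
      (hwVec r α β n) :=
  ⟨hwVec_ne_zero hβ hn, tensorOps_H_hwVec r α β n, tensorOps_K_hwVec r α β n,
    tensorOps_E_hwVec hα hβ hn⟩

/-- `F ^ r w` is killed by `E` and its weight only occurs in total degree at least `r`, where
vectors killed by `E` have no coordinates. -/
theorem tensorOps_F_pow_self_apply_eq_zero (hr : 2 ≤ r) {γ : ℂ} (hβ : goodα r β) {n : ℕ}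
    {w : (Fin r → ℂ) ⊗[ℂ] (Fin r → ℂ)} (hγ : wt r γ 0 = wt r α 0 + wt r β n)
    (hw : IsHighestWeightVector r (tensorOps (vermaOps r α) (vermaOps r β)) (wt r γ 0) w) :
    ((tensorOps (vermaOps r α) (vermaOps r β)).F ^ r) w = 0 := by
  have hA : IsUnrolledRep r (tensorOps (vermaOps r α) (vermaOps r β)) :=
    (isUnrolledRep_vermaOps hr α).tensorOps (isUnrolledRep_vermaOps hr β)
  have hE := hw.E_F_pow_succ_apply hr hA (r - 1)
  rw [Nat.sub_add_cancel (by omega), cE_self, zero_smul] at hE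
  refine eq_zero_of_tensorCoord_eq_zero fun k l => ?_
  rcases le_or_gt r (k + l) with hkl | hkl
  · exact tensorCoord_eq_zero_of_E_eq_zero hβ hE hkl
  · have hH := tensorCoord_tensorOps_H α β k l
      (((tensorOps (vermaOps r α) (vermaOps r β)).F ^ r) w)
    rw [hw.H_F_pow_apply hA, map_smul, smul_eq_mul] at hH
    refine (mul_eq_mul_right_iff.mp hH).resolve_left fun hwt => ?_
    have hdeg : ((k + l : ℕ) : ℂ) = (n + r : ℕ) := by
      simp only [wt] at hwt hγ
      push_cast at hwt hγ ⊢
      linear_combination (hwt - hγ) / 2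
    have := Nat.cast_injective hdeg
    omega

end HighestWeightVectors

section FusionRule

lemma wt_fusion_zero (r : ℕ) (α β : ℂ) (i : Fin r) :
    wt r (α + β - r + 2 * (i : ℕ) + 1) 0 = wt r α 0 + wt r β i.rev := by
  have hi : ((i.rev : ℕ) : ℂ) + i + 1 = r := by
    have := i.isLt
    exact_mod_cast (show (i.rev : ℕ) + i + 1 = r by rw [Fin.val_rev]; omega)
  simp only [wt]
  push_cast
  linear_combination 2 * hi

lemma goodα_fusion {r : ℕ} {α β : ℂ} (hαβ : ¬∃ n : ℤ, α + β = n) (i : ℕ) :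
    goodα r (α + β - r + 2 * i + 1) := by
  refine Or.inl fun ⟨n, hn⟩ => hαβ ⟨n + r - 2 * i - 1, ?_⟩
  push_cast
  linear_combination hn

theorem stmt18_general (r : ℕ) (hr : 2 ≤ r) (α β : ℂ) (hα : goodα r α) (hβ : goodα r β)
    (hαβ : ¬∃ n : ℤ, α + β = n) :
    (∀ i : Fin r, (vermaOps r (α + β - (r : ℂ) + 2 * ((i : ℕ) : ℂ) + 1)).IsSimple) ∧
      OpsIso (tensorOps (vermaOps r α) (vermaOps r β))
        (piOps fun i : Fin r => vermaOps r (α + β - (r : ℂ) + 2 * ((i : ℕ) : ℂ) + 1)) := by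
  have hgood (i : Fin r) : goodα r (α + β - r + 2 * (i : ℕ) + 1) := goodα_fusion hαβ i
  have hw (i : Fin r) : IsHighestWeightVector r (tensorOps (vermaOps r α) (vermaOps r β))
      (wt r (α + β - r + 2 * (i : ℕ) + 1) 0) (hwVec r α β i.rev) := by
    rw [wt_fusion_zero]
    exact isHighestWeightVector_hwVec hα hβ i.rev.isLt
  have hwt_inj : Function.Injective fun i : Fin r => wt r (α + β - r + 2 * (i : ℕ) + 1) 0 :=
    fun i j hij => Fin.ext (by simpa [wt] using hij)
  refine ⟨fun i => isSimple_vermaOps (by omega) (hgood i), opsIso_piOps_vermaOps hr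
    ((isUnrolledRep_vermaOps hr α).tensorOps (isUnrolledRep_vermaOps hr β)) hgood hw
    (fun i => tensorOps_F_pow_self_apply_eq_zero hr hβ (wt_fusion_zero r α β i) (hw i))
    (linearIndependent_of_isHighestWeightVector hwt_inj hw) ?_⟩
  simp

end FusionRule

/-- For `η ∉ ½ℤ` there is an isomorphism of `Ū`-modules
`V_η ⊗ V_η ≅ ⊕_{i=0}^{r-1} V_{2η-r+2i+1}`, a direct sum of simple Verma modules
with pairwise distinct highest weights; in particular `V_η ⊗ V_η` is semisimple and
multiplicity free. -/
theorem stmt18 (r : ℕ) (hr : 2 ≤ r) (η : ℂ) (hη : ¬∃ k : ℤ, η = (k : ℂ) / 2) :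
    (∀ i : Fin r, (vermaOps r (2 * η - (r : ℂ) + 2 * ((i : ℕ) : ℂ) + 1)).IsSimple) ∧
      OpsIso (tensorOps (vermaOps r η) (vermaOps r η))
        (piOps fun i : Fin r => vermaOps r (2 * η - (r : ℂ) + 2 * ((i : ℕ) : ℂ) + 1)) := by
  have hηη : ¬∃ n : ℤ, η + η = n := fun ⟨n, hn⟩ => hη ⟨n, by linear_combination hn / 2⟩
  have hgood : goodα r η := Or.inl fun ⟨n, hn⟩ => hηη ⟨n + n, by push_cast; rw [hn]⟩
  simpa only [two_mul η] using stmt18_general r hr η η hgood hgood hηη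

end Unrolled
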